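/- Let m ≥ 5 be an odd integer, n = 3(2^m − 1), and let β be a primitive n-th root of unity in F_{2^{2m}}. Then the cyclic code of length 2n over F_2 with generator polynomial (x−1) m_β(x)^2 m_{β^3}(x)^2 m_{β^{−1}}(x) m_{β^{−3}}(x) has dimension 6(2^m − 1) − 9m − 1 and minimum distance at least 10. -/

import Mathlib

open Polynomial

/-- The cyclic code of length `N` over the field `F` generated by the polynomial `g`.
Codewords are identified with the representatives of degree `< N` of the elements of the
ideal generated by `g` in `F[x]/(x^N - 1)`; equivalently, a polynomial `c` of degree `< N`
is a codeword iff `c ∈ (g, x^N - 1)` as an ideal of `F[x]`. -/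
noncomputable def cyclicCode (F : Type*) [Field F] (N : ℕ) (g : Polynomial F) :
    Submodule F (Polynomial F) :=
  Polynomial.degreeLT F N ⊓
    Submodule.restrictScalars F (Ideal.span ({g, Polynomial.X ^ N - 1} : Set (Polynomial F)))

/-- The minimum distance (equivalently, the minimum Hamming weight of a nonzero codeword,
a codeword being identified with its coefficient vector) of a linear code of polynomials. -/
noncomputable def minDist {F : Type*} [Field F] (C : Submodule F (Polynomial F)) : ℕ :=
  sInf {w | ∃ c ∈ C, c ≠ 0 ∧ c.support.card = w}

lemma bch_aux {K : Type*} [Field K] (S : Finset ℕ) (hS : S.Nonempty) (x f : ℕ → K)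
    (hx : Set.InjOn x S) (hf : ∀ i ∈ S, f i ≠ 0) (k : ℕ)
    (h : ∀ j < k, ∑ i ∈ S, f i * x i ^ j = 0) : k < S.card := by
  by_contra hk
  push Not at hk
  let e := S.equivFin
  have h0 : (fun j : Fin S.card => f (e.symm j)) = 0 := by
    apply Matrix.eq_zero_of_forall_pow_sum_mul_pow_eq_zero
      (f := fun j : Fin S.card => x (e.symm j))
    · intro a b hab
      have := hx (e.symm a).2 (e.symm b).2 hab
      exact e.symm.injective (Subtype.ext this)
    · intro i
      have h1 := h i (lt_of_lt_of_le i.2 hk)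
      rw [← Finset.sum_coe_sort] at h1
      rw [← h1]
      exact e.symm.sum_comp (fun s : S => f s * x s ^ (i : ℕ))
  obtain ⟨s, hs⟩ := hS
  have := congrFun h0 (e ⟨s, hs⟩)
  simp at this
  exact hf s hs this

lemma deg_aux {K : Type*} [Field K] [Fintype K] [Algebra (ZMod 2) K] (a : K) (k : ℕ)
    (hk : 0 < k) (ha : IsPrimitiveRoot a k) (j : ℕ) :
    (minpoly (ZMod 2) a).natDegree ∣ j ↔ k ∣ 2 ^ j - 1 := by
  have ha0 : a ≠ 0 := ha.ne_zero hk.ne'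
  have hint : IsIntegral (ZMod 2) a := Algebra.IsIntegral.isIntegral a
  rw [(minpoly.irreducible hint).natDegree_dvd_iff_dvd_X_pow_card_pow_sub_X,
    minpoly.dvd_iff, ← ha.pow_eq_one_iff_dvd]
  have hp : 2 ^ j = (2 ^ j - 1) + 1 := (Nat.sub_add_cancel Nat.one_le_two_pow).symm
  simp only [Nat.card_zmod, map_sub, map_pow, aeval_X, sub_eq_zero]
  constructor
  · intro h
    rw [hp, pow_succ] at h
    simpa [ha0] using h
  · intro h
    rw [hp, pow_succ, h, one_mul]

lemma deg_two {K : Type*} [Field K] [Fintype K] [Algebra (ZMod 2) K] (m : ℕ) (hm : 5 ≤ m)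
    (hmo : Odd m) (a : K) (ha : IsPrimitiveRoot a (3 * (2 ^ m - 1))) :
    (minpoly (ZMod 2) a).natDegree = 2 * m := by
  have h32 : 2 ^ 5 ≤ 2 ^ m := Nat.pow_le_pow_right (by norm_num) hm
  have key := deg_aux a _ (by omega) ha
  set d := (minpoly (ZMod 2) a).natDegree
  have h1 : d ∣ 2 * m := by
    rw [key]
    have h3 : 3 ∣ 2 ^ m + 1 := by
      obtain ⟨t, rfl⟩ := hmo
      have := Odd.nat_add_dvd_pow_add_pow 2 1 (n := 2 * t + 1) ⟨t, rfl⟩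
      simpa using this
    have : 2 ^ (2 * m) - 1 = (2 ^ m + 1) * (2 ^ m - 1) := by
      rw [mul_comm 2 m, pow_mul]
      exact Nat.sq_sub_sq (2 ^ m) 1
    rw [this]
    exact Nat.mul_dvd_mul_right h3 _
  have h2 := (key d).1 dvd_rfl
  have hdpos : 0 < d := minpoly.natDegree_pos (Algebra.IsIntegral.isIntegral a)
  have h3 : m < d := by
    by_contra hc
    have h4 : 2 ^ d ≤ 2 ^ m := Nat.pow_le_pow_right (by norm_num) (by omega)
    have h5 : 2 ^ 1 ≤ 2 ^ d := Nat.pow_le_pow_right (by norm_num) hdpos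
    have := Nat.le_of_dvd (by omega) h2
    omega
  obtain ⟨k, hk⟩ := h1
  have : k = 1 := by
    rcases k with _ | _ | k
    · omega
    · rfl
    · nlinarith
  subst this
  omega

lemma deg_one {K : Type*} [Field K] [Fintype K] [Algebra (ZMod 2) K] (m : ℕ) (hm : 5 ≤ m)
    (a : K) (ha : IsPrimitiveRoot a (2 ^ m - 1)) :
    (minpoly (ZMod 2) a).natDegree = m := by
  have h32 : 2 ^ 5 ≤ 2 ^ m := Nat.pow_le_pow_right (by norm_num) hm
  have key := deg_aux a _ (by omega) ha
  set d := (minpoly (ZMod 2) a).natDegree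
  have h1 : d ∣ m := by rw [key]
  have h2 := (key d).1 dvd_rfl
  have hdpos : 0 < d := minpoly.natDegree_pos (Algebra.IsIntegral.isIntegral a)
  have h5 : 2 ^ 1 ≤ 2 ^ d := Nat.pow_le_pow_right (by norm_num) hdpos
  have h3 := Nat.le_of_dvd (by omega) h2
  have h4 : 2 ^ m ≤ 2 ^ d := by omega
  have h6 := (Nat.pow_le_pow_iff_right (by norm_num)).1 h4
  exact le_antisymm (Nat.le_of_dvd (by omega) h1) h6

lemma inv_ne {K : Type*} [Field K] [Fintype K] [Algebra (ZMod 2) K] (m : ℕ) (hm : 5 ≤ m)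
    (a : K) (k : ℕ) (hk : 0 < k) (hd : 2 ^ m - 1 ∣ k) (ha : IsPrimitiveRoot a k) :
    minpoly (ZMod 2) a ≠ minpoly (ZMod 2) a⁻¹ := by
  intro h
  have ha0 : a ≠ 0 := ha.ne_zero hk.ne'
  obtain ⟨σ, hσ⟩ := isConjRoot_iff_exists_algEquiv.1 (show IsConjRoot (ZMod 2) a a⁻¹ from h)
  obtain ⟨i, hi⟩ := FiniteField.exists_forall_apply_eq_pow (ZMod 2) 2 K σ
  rw [hi, Nat.card_zmod] at hσ
  have h1 : a ^ (2 ^ i + 1) = 1 ∨ (a⁻¹) ^ (2 ^ i + 1) = 1 := by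
    first
    | left; rw [pow_succ, hσ, inv_mul_cancel₀ ha0]
    | right; rw [pow_succ, hσ, mul_inv_cancel₀ ha0]
  have h1 : a ^ (2 ^ i + 1) = 1 := by
    rcases h1 with h1 | h1
    · exact h1
    · rwa [inv_pow, inv_eq_one] at h1
  have h2 : 2 ^ m - 1 ∣ 2 ^ i + 1 := hd.trans ((ha.pow_eq_one_iff_dvd _).1 h1)
  have h32 : 2 ^ 5 ≤ 2 ^ m := Nat.pow_le_pow_right (by norm_num) hm
  have hmod : 2 ^ m ≡ 1 [MOD 2 ^ m - 1] :=
    ((Nat.modEq_iff_dvd' (by omega)).2 dvd_rfl).symm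
  have h3 : 2 ^ i ≡ 2 ^ (i % m) [MOD 2 ^ m - 1] := by
    conv_lhs => rw [← Nat.div_add_mod i m, pow_add, pow_mul]
    simpa using (hmod.pow (i / m)).mul_right (2 ^ (i % m))
  have h4 : 2 ^ m - 1 ∣ 2 ^ (i % m) + 1 := ((h3.add_right 1).dvd_iff dvd_rfl).1 h2
  have h5 := Nat.le_of_dvd (Nat.succ_pos _) h4
  have h6 : i % m < m := Nat.mod_lt _ (by omega)
  have h7 : 2 ^ (i % m) ≤ 2 ^ (m - 1) := Nat.pow_le_pow_right (by norm_num) (by omega)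
  have h8 : 2 ^ m = 2 * 2 ^ (m - 1) := by rw [← pow_succ']; congr 1; omega
  omega

lemma code_eq {F : Type*} [Field F] (N : ℕ) (g : F[X]) (hg : g ∣ X ^ N - 1) (c : F[X]) :
    c ∈ cyclicCode F N g ↔ c ∈ degreeLT F N ∧ g ∣ c := by
  have : Ideal.span ({g, X ^ N - 1} : Set F[X]) = Ideal.span {g} := by
    apply le_antisymm
    · rw [Ideal.span_le]
      rintro x (rfl | rfl)
      · exact Ideal.mem_span_singleton_self _
      · exact Ideal.mem_span_singleton.2 hg
    · exact Ideal.span_mono (by simp)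
  rw [cyclicCode, this, Submodule.mem_inf, Submodule.restrictScalars_mem, Ideal.mem_span_singleton]

lemma code_finrank {F : Type*} [Field F] (N : ℕ) (g : F[X]) (hg : g ∣ X ^ N - 1) (hg0 : g ≠ 0)
    (hd : g.natDegree ≤ N) :
    Module.finrank F (cyclicCode F N g) = N - g.natDegree := by
  have hmap : (degreeLT F (N - g.natDegree)).map (LinearMap.mulLeft F g) = cyclicCode F N g := by
    ext c
    rw [code_eq N g hg, Submodule.mem_map]
    have hdeg : ∀ q : F[X], g * q ∈ degreeLT F N ↔ q ∈ degreeLT F (N - g.natDegree) := by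
      intro q
      rw [mem_degreeLT, mem_degreeLT]
      by_cases hq : q = 0
      · subst hq; simp
      rw [← natDegree_lt_iff_degree_lt hq, ← natDegree_lt_iff_degree_lt (mul_ne_zero hg0 hq),
        natDegree_mul hg0 hq]
      omega
    constructor
    · rintro ⟨q, hq, rfl⟩
      exact ⟨(hdeg q).2 hq, dvd_mul_right _ _⟩
    · rintro ⟨h1, q, rfl⟩
      exact ⟨q, (hdeg q).1 h1, rfl⟩
  have hinj : Function.Injective (LinearMap.mulLeft F g) := fun a b hab =>
    mul_left_cancel₀ hg0 hab
  rw [← hmap, ← (Submodule.equivMapOfInjective _ hinj _).finrank_eq,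
    (degreeLTEquiv F _).finrank_eq, Module.finrank_fin_fun]

lemma sum_sq {K : Type*} [Field K] [CharP K 2] (S : Finset ℕ) (x : ℕ → K) (e : ℕ)
    (h : ∑ i ∈ S, x i ^ e = 0) : ∑ i ∈ S, x i ^ (2 * e) = 0 := by
  have := map_sum (frobenius K 2) (fun i => x i ^ e) S
  rw [h, map_zero] at this
  simp only [frobenius_def, ← pow_mul] at this
  rw [this]
  simp only [mul_comm]

lemma aeval_sum {K : Type*} [Field K] [Algebra (ZMod 2) K] (c : (ZMod 2)[X]) (y : K) :
    aeval y c = ∑ i ∈ c.support, y ^ i := by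
  rw [aeval_def, eval₂_eq_sum, Polynomial.sum]
  refine Finset.sum_congr rfl fun i hi => ?_
  have h1 : c.coeff i = 1 := by
    have := mem_support_iff.1 hi
    revert this
    generalize c.coeff i = t
    revert t
    decide
  rw [h1, map_one, one_mul]

lemma aeval_deriv_sum {K : Type*} [Field K] [Algebra (ZMod 2) K] [CharP K 2] (c : (ZMod 2)[X])
    (y : K) : y * aeval y (derivative c) = ∑ i ∈ c.support with Odd i, y ^ i := by
  rw [derivative_apply, Polynomial.sum, map_sum, Finset.mul_sum, Finset.sum_filter]
  refine Finset.sum_congr rfl fun i hi => ?_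
  have h1 : c.coeff i = 1 := by
    have := mem_support_iff.1 hi
    revert this
    generalize c.coeff i = t
    revert t
    decide
  split_ifs with ho
  · have h2 : ((i : ℕ) : ZMod 2) = 1 := (ZMod.natCast_eq_one_iff_odd).2 ho
    obtain ⟨t, rfl⟩ := ho
    rw [h1, h2]
    simp [pow_succ']
  · have h2 : ((i : ℕ) : ZMod 2) = 0 := (ZMod.natCast_eq_zero_iff_even).2 (Nat.not_odd_iff_even.1 ho)
    rw [h1, h2]
    simp

lemma dist_aux {K : Type*} [Field K] [Algebra (ZMod 2) K] [CharP K 2] (n : ℕ) (hno : Odd n)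
    (β : K) (hβ : IsPrimitiveRoot β n) (c : (ZMod 2)[X]) (hc : c ≠ 0) (hdeg : c.natDegree < 2 * n)
    (h0 : aeval (1 : K) c = 0) (h1 : aeval β c = 0) (h3 : aeval (β ^ 3) c = 0)
    (h1' : aeval β (derivative c) = 0) (h3' : aeval (β ^ 3) (derivative c) = 0)
    (hi1 : aeval β⁻¹ c = 0) (hi3 : aeval (β ^ 3)⁻¹ c = 0) : 10 ≤ c.support.card := by
  have hβ0 : β ≠ 0 := hβ.ne_zero hno.pos.ne'
  have hinj : ∀ T : Finset ℕ, T ⊆ c.support → (∀ i ∈ T, ∀ j ∈ T, (Odd i ↔ Odd j)) →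
      Set.InjOn (fun i => β ^ i) T := by
    intro T hT hpar i hi j hj hij
    have hlt : ∀ i ∈ T, i < 2 * n := fun i hi =>
      lt_of_le_of_lt (le_natDegree_of_mem_supp i (hT hi)) hdeg
    have hm : i ≡ j [MOD n] := by
      rcases le_total i j with hle | hle
      · rw [Nat.modEq_iff_dvd' hle, ← hβ.pow_eq_one_iff_dvd]
        have hij : β ^ i = β ^ j := hij
        rw [← Nat.add_sub_cancel' hle, pow_add] at hij
        simpa [hβ0] using hij
      · refine Nat.ModEq.symm ?_
        rw [Nat.modEq_iff_dvd' hle, ← hβ.pow_eq_one_iff_dvd]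
        have hij : β ^ i = β ^ j := hij
        rw [← Nat.add_sub_cancel' hle, pow_add] at hij
        simpa [hβ0] using hij
    have h2 : i ≡ j [MOD 2] := by
      have := hpar i hi j hj
      rw [Nat.odd_iff, Nat.odd_iff] at this
      unfold Nat.ModEq
      omega
    have h2n : i ≡ j [MOD 2 * n] :=
      (Nat.modEq_and_modEq_iff_modEq_mul (Nat.coprime_two_left.2 hno)).1 ⟨h2, hm⟩
    exact h2n.eq_of_lt_of_lt (hlt i hi) (hlt j hj)
  have s1 := aeval_deriv_sum c β
  have s3 := aeval_deriv_sum c (β ^ 3)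
  rw [h1', mul_zero] at s1
  rw [h3', mul_zero] at s3
  rw [aeval_sum] at h0 h1 h3 hi1 hi3
  have e1 := Finset.sum_filter_add_sum_filter_not c.support (fun i => Odd i) (fun i => β ^ i)
  have e3 := Finset.sum_filter_add_sum_filter_not c.support (fun i => Odd i)
    (fun i => (β ^ 3) ^ i)
  rw [h1, ← s1, zero_add] at e1
  rw [h3, ← s3, zero_add] at e3
  have hcard := Finset.card_filter_add_card_filter_not (s := c.support) (fun i => Odd i)
  -- five from one half
  have five : ∀ T : Finset ℕ, T.Nonempty → T ⊆ c.support →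
      (∀ i ∈ T, ∀ j ∈ T, (Odd i ↔ Odd j)) → ∑ i ∈ T, β ^ i = 0 → ∑ i ∈ T, (β ^ 3) ^ i = 0 →
      4 < T.card := by
    intro T hT hTs hp t1 t3
    have t1 : ∑ i ∈ T, (β ^ i) ^ 1 = 0 := by simpa using t1
    have t3 : ∑ i ∈ T, (β ^ i) ^ 3 = 0 := by
      rw [← t3]; exact Finset.sum_congr rfl fun i _ => pow_right_comm _ _ _
    have t2 := sum_sq T _ 1 t1
    have t4 := sum_sq T _ 2 t2
    refine bch_aux T hT (fun i => β ^ i) (fun i => β ^ i) (hinj T hTs hp)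
      (fun i _ => pow_ne_zero _ hβ0) 4 ?_
    intro j hj
    simp only [← pow_succ']
    interval_cases j <;> assumption
  have ten : (∀ i ∈ c.support, ∀ j ∈ c.support, (Odd i ↔ Odd j)) → 9 < c.support.card := by
    intro hp
    have t1 : ∑ i ∈ c.support, (β ^ i) ^ 1 = 0 := by simpa using h1
    have t3 : ∑ i ∈ c.support, (β ^ i) ^ 3 = 0 := by
      rw [← h3]; exact Finset.sum_congr rfl fun i _ => pow_right_comm _ _ _
    have t2 := sum_sq _ _ 1 t1
    have t4 := sum_sq _ _ 2 t2
    have r1 : ∑ i ∈ c.support, ((β⁻¹) ^ i) ^ 1 = 0 := by simpa using hi1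
    have r3 : ∑ i ∈ c.support, ((β⁻¹) ^ i) ^ 3 = 0 := by
      rw [← hi3]; exact Finset.sum_congr rfl fun i _ => by rw [← inv_pow, pow_right_comm]
    have r2 := sum_sq _ _ 1 r1
    have r4 := sum_sq _ _ 2 r2
    refine bch_aux c.support (by simpa using hc) (fun i => β ^ i) (fun i => ((β⁻¹) ^ i) ^ 4)
      (hinj _ subset_rfl hp)
      (fun i _ => pow_ne_zero _ (pow_ne_zero _ (inv_ne_zero hβ0))) 9 ?_
    have hlow : ∀ j ≤ 4, ∑ i ∈ c.support, ((β⁻¹) ^ i) ^ 4 * (β ^ i) ^ j =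
        ∑ i ∈ c.support, ((β⁻¹) ^ i) ^ (4 - j) := by
      intro j hj
      refine Finset.sum_congr rfl fun i _ => ?_
      have hne : β ^ i ≠ 0 := pow_ne_zero _ hβ0
      have h4 : ((β⁻¹) ^ i) ^ 4 = ((β⁻¹) ^ i) ^ (4 - j) * ((β⁻¹) ^ i) ^ j := by
        rw [← pow_add, Nat.sub_add_cancel hj]
      rw [h4, mul_assoc, ← mul_pow, inv_pow, inv_mul_cancel₀ hne, one_pow, mul_one]
    have hhigh : ∀ j, ∑ i ∈ c.support, ((β⁻¹) ^ i) ^ 4 * (β ^ i) ^ (4 + j) =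
        ∑ i ∈ c.support, (β ^ i) ^ j := by
      intro j
      refine Finset.sum_congr rfl fun i _ => ?_
      have hne : β ^ i ≠ 0 := pow_ne_zero _ hβ0
      rw [inv_pow, pow_add, ← mul_assoc, ← mul_pow, inv_mul_cancel₀ hne, one_pow, one_mul]
    intro j hj
    interval_cases j
    · exact (hlow 0 (by norm_num)).trans r4
    · exact (hlow 1 (by norm_num)).trans r3
    · exact (hlow 2 (by norm_num)).trans r2
    · exact (hlow 3 (by norm_num)).trans r1
    · refine (hlow 4 (by norm_num)).trans ?_
      simpa using h0
    · exact (hhigh 1).trans t1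
    · exact (hhigh 2).trans t2
    · exact (hhigh 3).trans t3
    · exact (hhigh 4).trans t4
  by_cases hA : (c.support.filter (fun i => Odd i)).Nonempty
  · by_cases hB : (c.support.filter (fun i => ¬ Odd i)).Nonempty
    · have a1 := five _ hA (Finset.filter_subset _ _) (by
        intro i hi j hj
        simp only [Finset.mem_filter] at hi hj
        exact iff_of_true hi.2 hj.2) s1.symm s3.symm
      have a2 := five _ hB (Finset.filter_subset _ _) (by
        intro i hi j hj
        simp only [Finset.mem_filter] at hi hj
        exact iff_of_false hi.2 hj.2) e1 e3
      omega
    · apply ten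
      rw [Finset.not_nonempty_iff_eq_empty, Finset.filter_eq_empty_iff] at hB
      intro i hi j hj
      exact iff_of_true (not_not.1 (hB hi)) (not_not.1 (hB hj))
  · apply ten
    rw [Finset.not_nonempty_iff_eq_empty, Finset.filter_eq_empty_iff] at hA
    intro i hi j hj
    exact iff_of_false (hA hi) (hA hj)

lemma cop_aux {F : Type*} [Field F] (p q : F[X]) (hp : Irreducible p) (hq : Irreducible q)
    (hpm : p.Monic) (hqm : q.Monic) (hne : p ≠ q) : IsCoprime p q := by
  rw [hp.coprime_iff_not_dvd]
  intro h
  exact hne (eq_of_monic_of_associated hpm hqm (hp.associated_of_dvd hq h))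

/-- for odd `m ≥ 5`, `n = 3(2^m - 1)` and `β` a primitive `n`-th root of
unity in `F_{2^{2m}}`, the repeated-root binary cyclic code of length `2n` with generator
polynomial `(x-1) m_β(x)^2 m_{β³}(x)^2 m_{β⁻¹}(x) m_{β⁻³}(x)` has dimension
`6(2^m - 1) - 9m - 1` and minimum distance at least `10`. -/
theorem statement15 {K : Type*} [Field K] [Fintype K] [Algebra (ZMod 2) K]
    (m : ℕ) (hm : 5 ≤ m) (hmo : Odd m) (hK : Fintype.card K = 2 ^ (2 * m))
    (n : ℕ) (hn : n = 3 * (2 ^ m - 1))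
    (β : K) (hβ : IsPrimitiveRoot β n) :
    Module.finrank (ZMod 2)
        (cyclicCode (ZMod 2) (2 * n)
          ((X - 1) * (minpoly (ZMod 2) β) ^ 2 * (minpoly (ZMod 2) (β ^ 3)) ^ 2 *
            minpoly (ZMod 2) β⁻¹ * minpoly (ZMod 2) (β ^ 3)⁻¹)) =
      6 * (2 ^ m - 1) - 9 * m - 1 ∧
    10 ≤ minDist (cyclicCode (ZMod 2) (2 * n)
        ((X - 1) * (minpoly (ZMod 2) β) ^ 2 * (minpoly (ZMod 2) (β ^ 3)) ^ 2 *
          minpoly (ZMod 2) β⁻¹ * minpoly (ZMod 2) (β ^ 3)⁻¹)) := by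
  have h32 : 2 ^ 5 ≤ 2 ^ m := Nat.pow_le_pow_right (by norm_num) hm
  have hbig : 6 * m + 2 ≤ 2 ^ m := by
    clear * - hm
    induction m, hm using Nat.le_induction with
    | base => norm_num
    | succ k hk ih => rw [pow_succ]; omega
  have heven : 2 ∣ 2 ^ m := dvd_pow_self 2 (by omega)
  subst hn
  have hnpos : 0 < 3 * (2 ^ m - 1) := by omega
  have hno : Odd (3 * (2 ^ m - 1)) := by rw [Nat.odd_iff]; omega
  have hγ : IsPrimitiveRoot (β ^ 3) (2 ^ m - 1) := hβ.pow hnpos rfl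
  have : CharP K 2 := charP_of_injective_algebraMap (algebraMap (ZMod 2) K).injective 2
  have d1 := deg_two m hm hmo β hβ
  have d2 := deg_one m hm (β ^ 3) hγ
  have d3 := deg_two m hm hmo β⁻¹ hβ.inv
  have d4 := deg_one m hm (β ^ 3)⁻¹ hγ.inv
  have n13 := inv_ne m hm β _ hnpos (dvd_mul_left _ _) hβ
  have n24 := inv_ne m hm (β ^ 3) _ (by omega) dvd_rfl hγ
  have irr : ∀ a : K, Irreducible (minpoly (ZMod 2) a) := fun a =>
    minpoly.irreducible (Algebra.IsIntegral.isIntegral a)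
  have mon : ∀ a : K, (minpoly (ZMod 2) a).Monic := fun a =>
    minpoly.monic (Algebra.IsIntegral.isIntegral a)
  have dvdn : ∀ a : K, a ^ (3 * (2 ^ m - 1)) = 1 →
      minpoly (ZMod 2) a ∣ X ^ (3 * (2 ^ m - 1)) - 1 := by
    intro a ha
    rw [minpoly.dvd_iff]
    simp [ha]
  have v1 := dvdn β hβ.pow_eq_one
  have v2 := dvdn (β ^ 3) (by rw [pow_right_comm, hβ.pow_eq_one, one_pow])
  have v3 := dvdn β⁻¹ hβ.inv.pow_eq_one
  have v4 := dvdn (β ^ 3)⁻¹ (by rw [inv_pow, pow_right_comm, hβ.pow_eq_one, one_pow, inv_one])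
  have v0 : (X - 1 : (ZMod 2)[X]) ∣ X ^ (3 * (2 ^ m - 1)) - 1 := by
    simpa using sub_dvd_pow_sub_pow (X : (ZMod 2)[X]) 1 (3 * (2 ^ m - 1))
  have i0 : Irreducible (X - 1 : (ZMod 2)[X]) := by
    rw [← C_1]; exact irreducible_X_sub_C 1
  have m0 : (X - 1 : (ZMod 2)[X]).Monic := by
    rw [← C_1]; exact monic_X_sub_C 1
  have d0 : (X - 1 : (ZMod 2)[X]).natDegree = 1 := by
    rw [← C_1]; exact natDegree_X_sub_C 1
  have i1 := irr β
  have i2 := irr (β ^ 3)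
  have i3 := irr β⁻¹
  have i4 := irr (β ^ 3)⁻¹
  have m1 := mon β
  have m2 := mon (β ^ 3)
  have m3 := mon β⁻¹
  have m4 := mon (β ^ 3)⁻¹
  have z1 : aeval β (minpoly (ZMod 2) β) = 0 := minpoly.aeval _ _
  have z2 : aeval (β ^ 3) (minpoly (ZMod 2) (β ^ 3)) = 0 := minpoly.aeval _ _
  have z3 : aeval β⁻¹ (minpoly (ZMod 2) β⁻¹) = 0 := minpoly.aeval _ _
  have z4 : aeval (β ^ 3)⁻¹ (minpoly (ZMod 2) (β ^ 3)⁻¹) = 0 := minpoly.aeval _ _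
  generalize minpoly (ZMod 2) β = p1 at *
  generalize minpoly (ZMod 2) (β ^ 3) = p2 at *
  generalize minpoly (ZMod 2) β⁻¹ = p3 at *
  generalize minpoly (ZMod 2) (β ^ 3)⁻¹ = p4 at *
  have ned : ∀ p q : (ZMod 2)[X], p.natDegree ≠ q.natDegree → p ≠ q := by
    rintro p q h rfl; exact h rfl
  have c01 := cop_aux _ _ i0 i1 m0 m1 (ned _ _ (by omega))
  have c02 := cop_aux _ _ i0 i2 m0 m2 (ned _ _ (by omega))
  have c03 := cop_aux _ _ i0 i3 m0 m3 (ned _ _ (by omega))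
  have c04 := cop_aux _ _ i0 i4 m0 m4 (ned _ _ (by omega))
  have c12 := cop_aux _ _ i1 i2 m1 m2 (ned _ _ (by omega))
  have c13 := cop_aux _ _ i1 i3 m1 m3 n13
  have c14 := cop_aux _ _ i1 i4 m1 m4 (ned _ _ (by omega))
  have c23 := cop_aux _ _ i2 i3 m2 m3 (ned _ _ (by omega))
  have c24 := cop_aux _ _ i2 i4 m2 m4 n24
  have c34 := cop_aux _ _ i3 i4 m3 m4 (ned _ _ (by omega))
  have w12 : p1 * p2 ∣ X ^ (3 * (2 ^ m - 1)) - 1 := c12.mul_dvd v1 v2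
  have w5 : (X - 1) * p1 * p2 * p3 * p4 ∣ X ^ (3 * (2 ^ m - 1)) - 1 := by
    refine IsCoprime.mul_dvd ?_ (IsCoprime.mul_dvd ?_ (IsCoprime.mul_dvd ?_
      (c01.mul_dvd v0 v1) v2) v3) v4
    · exact ((c04.mul_left c14).mul_left c24).mul_left c34
    · exact (c03.mul_left c13).mul_left c23
    · exact c02.mul_left c12
  set g : (ZMod 2)[X] := (X - 1) * p1 ^ 2 * p2 ^ 2 * p3 * p4 with hg
  have hgd : g ∣ X ^ (2 * (3 * (2 ^ m - 1))) - 1 := by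
    have e : (X ^ (2 * (3 * (2 ^ m - 1))) - 1 : (ZMod 2)[X]) =
        (X ^ (3 * (2 ^ m - 1)) - 1) * (X ^ (3 * (2 ^ m - 1)) - 1) := by
      have := sub_pow_char (p := 2) (X ^ (3 * (2 ^ m - 1)) : (ZMod 2)[X]) 1
      rw [one_pow, ← pow_mul, mul_comm _ 2] at this
      rw [← this, sq]
    rw [e]
    have := mul_dvd_mul w12 w5
    refine dvd_trans (dvd_of_eq ?_) this
    rw [hg]; ring
  have gm : g.Monic := (((m0.mul (m1.pow 2)).mul (m2.pow 2)).mul m3).mul m4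
  have gdeg : g.natDegree = 9 * m + 1 := by
    rw [hg, (((m0.mul (m1.pow 2)).mul (m2.pow 2)).mul m3).natDegree_mul m4,
      ((m0.mul (m1.pow 2)).mul (m2.pow 2)).natDegree_mul m3,
      (m0.mul (m1.pow 2)).natDegree_mul (m2.pow 2), m0.natDegree_mul (m1.pow 2),
      m1.natDegree_pow, m2.natDegree_pow, d0, d1, d2, d3, d4]
    ring
  constructor
  · rw [code_finrank _ g hgd gm.ne_zero (by omega), gdeg]
    omega
  · apply le_csInf
    · refine ⟨_, g, (code_eq _ g hgd g).2 ⟨?_, dvd_rfl⟩, gm.ne_zero, rfl⟩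
      rw [mem_degreeLT, ← natDegree_lt_iff_degree_lt gm.ne_zero]
      omega
    · rintro w ⟨c, hcC, hc0, rfl⟩
      obtain ⟨hcd, hgc⟩ := (code_eq _ g hgd c).1 hcC
      rw [mem_degreeLT, ← natDegree_lt_iff_degree_lt hc0] at hcd
      have root : ∀ (p q : (ZMod 2)[X]) (a : K), p ∣ q → aeval a p = 0 → aeval a q = 0 := by
        rintro p q a ⟨r, rfl⟩ h
        rw [map_mul, h, zero_mul]
      have q1 : p1 ^ 2 ∣ c := dvd_trans ⟨(X - 1) * p2 ^ 2 * p3 * p4, by rw [hg]; ring⟩ hgc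
      have q2 : p2 ^ 2 ∣ c := dvd_trans ⟨(X - 1) * p1 ^ 2 * p3 * p4, by rw [hg]; ring⟩ hgc
      have q3 : p3 ∣ c := dvd_trans ⟨(X - 1) * p1 ^ 2 * p2 ^ 2 * p4, by rw [hg]; ring⟩ hgc
      have q4 : p4 ∣ c := dvd_trans ⟨(X - 1) * p1 ^ 2 * p2 ^ 2 * p3, by rw [hg]; ring⟩ hgc
      have q0 : X - 1 ∣ c := dvd_trans ⟨p1 ^ 2 * p2 ^ 2 * p3 * p4, by rw [hg]; ring⟩ hgc
      have q1' : p1 ∣ derivative c := by simpa using pow_sub_one_dvd_derivative_of_pow_dvd q1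
      have q2' : p2 ∣ derivative c := by simpa using pow_sub_one_dvd_derivative_of_pow_dvd q2
      exact dist_aux _ hno β hβ c hc0 hcd (root _ _ _ q0 (by simp))
        (root _ _ _ (dvd_trans (dvd_pow_self _ two_ne_zero) q1) z1)
        (root _ _ _ (dvd_trans (dvd_pow_self _ two_ne_zero) q2) z2)
        (root _ _ _ q1' z1) (root _ _ _ q2' z2) (root _ _ _ q3 z3) (root _ _ _ q4 z4)
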